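/- Let V be a finite-dimensional complex vector space, f : V → V a linear endomorphism whose minimal polynomial has degree dim V, θ : V* → V a symmetric linear isomorphism and κ : V → V* a symmetric linear map with f = θ ∘ κ. If a : V* → V and b : V → V* are symmetric linear maps with θ∘b + a∘κ = 0, then there exists a polynomial P ∈ ℂ[T] such that a = θ ∘ ᵗ(P(f)) and b = −ᵗ(P(f)) ∘ κ. -/

import Mathlib

/-!
Put `g = a ∘ θ⁻¹`. Symmetry of `a` and `θ` gives `a = g ∘ θ = θ ∘ ᵗg`, and then
`θ ∘ b + a ∘ κ = 0` gives `b = -ᵗg ∘ κ`. Symmetry of `b` and `κ` now reads `ᵗg ∘ κ = κ ∘ g`, so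
`g ∘ θ ∘ κ = θ ∘ ᵗg ∘ κ = θ ∘ κ ∘ g`, i.e. `g` commutes with `f = θ ∘ κ`. The degree of the minimal
polynomial makes `V` a cyclic `ℂ[f]`-module, and an endomorphism commuting with `f` is then
determined by its value on a generator, hence is a polynomial in `f`.
-/

open Module Polynomial

section CyclicVector

/-- `x` is a cyclic vector of `f`: it generates `V` as a module over `R[X]`, where `X` acts
as `f`. Spelled out with `Polynomial.aeval` rather than through the type synonym `Module.AEval'`. -/
def IsCyclicVector {R V : Type*} [CommSemiring R] [AddCommMonoid V] [Module R V]
    (f : End R V) (x : V) : Prop :=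
  ∀ v : V, ∃ p : R[X], aeval f p x = v

theorem IsCyclicVector.exists_aeval_eq_of_commute {R V : Type*} [CommSemiring R]
    [AddCommMonoid V] [Module R V] {f g : End R V} {x : V} (hx : IsCyclicVector f x)
    (hgf : Commute g f) : ∃ P : R[X], aeval f P = g := by
  obtain ⟨P, hP⟩ := hx (g x)
  refine ⟨P, LinearMap.ext fun v => ?_⟩
  obtain ⟨q, rfl⟩ := hx v
  have hgq : Commute g (aeval f q) :=
    Algebra.commute_of_mem_adjoin_singleton_of_commute (aeval_mem_adjoin_singleton R f) hgf
  calc aeval f P (aeval f q x)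
      = aeval f q (aeval f P x) := LinearMap.congr_fun (Commute.all P q |>.map (aeval f)).eq x
    _ = aeval f q (g x) := by rw [hP]
    _ = g (aeval f q x) := (LinearMap.congr_fun hgq.eq x).symm

variable {K V : Type*} [Field K] [AddCommGroup V] [Module K V] [FiniteDimensional K V]

theorem exists_ker_toSpanSingleton_eq_span_minpoly (f : End K V) :
    ∃ x : AEval' f, LinearMap.ker (LinearMap.toSpanSingleton K[X] (AEval' f) x) =
      Ideal.span {minpoly K f} := by
  obtain ⟨x, hx⟩ := exists_ker_toSpanSingleton_eq_annihilator K[X] (AEval' f)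
  exact ⟨x, by rw [hx, AEval.annihilator_eq_ker_aeval, minpoly.ker_aeval_eq_span_minpoly]⟩

theorem exists_isCyclicVector_of_natDegree_minpoly_eq_finrank {f : End K V}
    (hf : (minpoly K f).natDegree = finrank K V) : ∃ x, IsCyclicVector f x := by
  obtain ⟨x, hx⟩ := exists_ker_toSpanSingleton_eq_span_minpoly f
  let evalAt : K[X] →ₗ[K] AEval' f :=
    (LinearMap.toSpanSingleton K[X] (AEval' f) x).restrictScalars K
  have finrank_range : finrank K (LinearMap.range evalAt) = finrank K (AEval' f) :=
    calc finrank K (LinearMap.range evalAt)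
        = finrank K (K[X] ⧸ Ideal.span {minpoly K f}) := by
          rw [← hx]
          exact ((LinearMap.toSpanSingleton K[X] (AEval' f) x).quotKerEquivRange.restrictScalars
            K).finrank_eq.symm
      _ = (minpoly K f).natDegree := finrank_quotient_span_eq_natDegree
      _ = finrank K V := hf
      _ = finrank K (AEval' f) := (AEval'.of f).finrank_eq
  have evalAt_surjective : Function.Surjective evalAt :=
    LinearMap.range_eq_top.mp (Submodule.eq_top_of_finrank_eq finrank_range)
  exact ⟨(AEval'.of f).symm x, fun v => evalAt_surjective (AEval'.of f v)⟩

end CyclicVector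

section SymmetricMap

variable {R V : Type*} [CommSemiring R] [AddCommMonoid V] [Module R V]

theorem eq_of_forall_dual_apply_eq_of_symmetric
    {θ : Dual R V →ₗ[R] V} (hθsurj : Function.Surjective θ)
    (hθsym : ∀ φ ψ : Dual R V, ψ (θ φ) = φ (θ ψ))
    {v w : V} (hvw : ∀ ψ : Dual R V, ψ v = ψ w) : v = w := by
  obtain ⟨φ, rfl⟩ := hθsurj v
  obtain ⟨χ, rfl⟩ := hθsurj w
  suffices φ = χ by rw [this]
  ext u
  obtain ⟨ψ, rfl⟩ := hθsurj u
  rw [← hθsym, hvw, hθsym]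

theorem comp_eq_comp_dualMap_of_symmetric
    {θ : Dual R V →ₗ[R] V} {g : End R V} (hθsurj : Function.Surjective θ)
    (hθsym : ∀ φ ψ : Dual R V, ψ (θ φ) = φ (θ ψ))
    (hgθsym : ∀ φ ψ : Dual R V, ψ ((g ∘ₗ θ) φ) = φ ((g ∘ₗ θ) ψ)) :
    g ∘ₗ θ = θ ∘ₗ g.dualMap := by
  ext φ
  refine eq_of_forall_dual_apply_eq_of_symmetric hθsurj hθsym fun ψ => ?_
  calc ψ (g (θ φ)) = g.dualMap φ (θ ψ) := hgθsym φ ψ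
    _ = ψ (θ (g.dualMap φ)) := (hθsym _ ψ).symm

theorem dualMap_comp_eq_comp_of_symmetric
    {κ : V →ₗ[R] Dual R V} {g : End R V} (hκsym : ∀ v w : V, κ v w = κ w v)
    (hgκsym : ∀ v w : V, (g.dualMap ∘ₗ κ) v w = (g.dualMap ∘ₗ κ) w v) :
    g.dualMap ∘ₗ κ = κ ∘ₗ g := by
  ext v w
  calc κ v (g w) = κ w (g v) := hgκsym v w
    _ = κ (g v) w := hκsym w (g v)

end SymmetricMap

section SymmetricFactorization

variable {R V : Type*} [CommRing R] [AddCommGroup V] [Module R V]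

theorem exists_commute_and_eq_comp_dualMap
    {θ a : Dual R V →ₗ[R] V} {κ b : V →ₗ[R] Dual R V} (hθbij : Function.Bijective θ)
    (hθsym : ∀ φ ψ : Dual R V, ψ (θ φ) = φ (θ ψ)) (hκsym : ∀ v w : V, κ v w = κ w v)
    (hasym : ∀ φ ψ : Dual R V, ψ (a φ) = φ (a ψ)) (hbsym : ∀ v w : V, b v w = b w v)
    (hab : θ ∘ₗ b + a ∘ₗ κ = 0) :
    ∃ g : End R V, Commute g (θ ∘ₗ κ) ∧ a = θ ∘ₗ g.dualMap ∧ b = -(g.dualMap ∘ₗ κ) := by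
  obtain ⟨g, rfl⟩ : ∃ g : End R V, g ∘ₗ θ = a :=
    ⟨a ∘ₗ (LinearEquiv.ofBijective θ hθbij).symm, LinearMap.ext fun φ =>
      congrArg a ((LinearEquiv.ofBijective θ hθbij).symm_apply_apply φ)⟩
  have hgθ : g ∘ₗ θ = θ ∘ₗ g.dualMap :=
    comp_eq_comp_dualMap_of_symmetric hθbij.surjective hθsym hasym
  have hb : b = -(g.dualMap ∘ₗ κ) := by
    rw [← LinearMap.cancel_left hθbij.injective, LinearMap.comp_neg, ← LinearMap.comp_assoc, ← hgθ]
    exact eq_neg_of_add_eq_zero_left hab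
  have hgκ : g.dualMap ∘ₗ κ = κ ∘ₗ g :=
    dualMap_comp_eq_comp_of_symmetric hκsym fun v w => by simpa [hb] using hbsym v w
  have hcomm : g ∘ₗ θ ∘ₗ κ = (θ ∘ₗ κ) ∘ₗ g :=
    calc g ∘ₗ θ ∘ₗ κ = θ ∘ₗ g.dualMap ∘ₗ κ := congrArg (· ∘ₗ κ) hgθ
      _ = (θ ∘ₗ κ) ∘ₗ g := congrArg (θ ∘ₗ ·) hgκ
  exact ⟨g, hcomm, hgθ, hb⟩

theorem kernel_pairing_is_coboundary_general {f : End R V} {x : V} (hx : IsCyclicVector f x)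
    {θ a : Dual R V →ₗ[R] V} {κ b : V →ₗ[R] Dual R V} (hθbij : Function.Bijective θ)
    (hθsym : ∀ φ ψ : Dual R V, ψ (θ φ) = φ (θ ψ)) (hκsym : ∀ v w : V, κ v w = κ w v)
    (hfθκ : f = θ ∘ₗ κ)
    (hasym : ∀ φ ψ : Dual R V, ψ (a φ) = φ (a ψ)) (hbsym : ∀ v w : V, b v w = b w v)
    (hab : θ ∘ₗ b + a ∘ₗ κ = 0) :
    ∃ P : R[X], a = θ ∘ₗ (aeval f P).dualMap ∧ b = -((aeval f P).dualMap ∘ₗ κ) := by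
  obtain ⟨g, hgf, ha, hb⟩ :=
    exists_commute_and_eq_comp_dualMap hθbij hθsym hκsym hasym hbsym hab
  obtain ⟨P, rfl⟩ := hx.exists_aeval_eq_of_commute (hfθκ ▸ hgf)
  exact ⟨P, ha, hb⟩

end SymmetricFactorization

/-- With `f = θ ∘ κ` a symmetric factorization of an endomorphism whose
minimal polynomial has degree `dim V`: if `a : V* → V` and `b : V → V*` are symmetric
linear maps with `θ∘b + a∘κ = 0`, then there exists a polynomial `P ∈ ℂ[T]` such that
`a = θ ∘ ᵗ(P(f))` and `b = −ᵗ(P(f)) ∘ κ`. -/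
theorem kernel_pairing_is_coboundary
    (V : Type*) [AddCommGroup V] [Module ℂ V] [FiniteDimensional ℂ V]
    (f : Module.End ℂ V)
    (hf : (minpoly ℂ f).natDegree = Module.finrank ℂ V)
    (θ : Module.Dual ℂ V →ₗ[ℂ] V) (κ : V →ₗ[ℂ] Module.Dual ℂ V)
    (hθbij : Function.Bijective θ)
    (hθsym : ∀ φ ψ : Module.Dual ℂ V, ψ (θ φ) = φ (θ ψ))
    (hκsym : ∀ v w : V, κ v w = κ w v)
    (hfθκ : f = θ ∘ₗ κ)
    (a : Module.Dual ℂ V →ₗ[ℂ] V) (b : V →ₗ[ℂ] Module.Dual ℂ V)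
    (hasym : ∀ φ ψ : Module.Dual ℂ V, ψ (a φ) = φ (a ψ))
    (hbsym : ∀ v w : V, b v w = b w v)
    (hab : θ ∘ₗ b + a ∘ₗ κ = 0) :
    ∃ P : Polynomial ℂ,
      a = θ ∘ₗ LinearMap.dualMap (Polynomial.aeval f P) ∧
      b = -(LinearMap.dualMap (Polynomial.aeval f P) ∘ₗ κ) := by
  obtain ⟨x, hx⟩ := exists_isCyclicVector_of_natDegree_minpoly_eq_finrank hf
  exact kernel_pairing_is_coboundary_general hx hθbij hθsym hκsym hfθκ hasym hbsym hab
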